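/- Let (E,𝒞,r) be a semimatroid without loops, and define r̂ : 2^E → ℕ by r̂(X) = max{r(Y) : Y ⊆ X, Y ∈ 𝒞}. Define w_i(M_𝒞) by Σ_{X ⊆ E} (−1)^{|X|} t^{r̂(E)−r̂(X)} = Σ_{i=0}^{r̂(E)} (−1)^i w_i(M_𝒞) t^{r̂(E)−i}. Then w_i(M_𝒞) ≤ w_i(𝒞) for every 0 ≤ i ≤ r(𝒞). -/

import Mathlib

/-- A semimatroid on a finite ground set `E`: a nonempty, subset-closed collection `C`
of "central" subsets of `E`, together with a rank function `r` satisfying (SR1)-(SR5). -/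
structure Semimatroid (E : Type*) [DecidableEq E] [Fintype E] where
  C : Finset (Finset E)
  r : Finset E → ℕ
  C_nonempty : C.Nonempty
  mem_of_subset : ∀ ⦃X Y : Finset E⦄, X ∈ C → Y ⊆ X → Y ∈ C
  r_le_card : ∀ ⦃X : Finset E⦄, X ∈ C → r X ≤ X.card
  r_mono : ∀ ⦃X Y : Finset E⦄, X ∈ C → Y ∈ C → X ⊆ Y → r X ≤ r Y
  submodular : ∀ ⦃X Y : Finset E⦄, X ∈ C → Y ∈ C → X ∪ Y ∈ C →
    r (X ∩ Y) + r (X ∪ Y) ≤ r X + r Y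
  union_mem : ∀ ⦃X Y : Finset E⦄, X ∈ C → Y ∈ C → r X = r (X ∩ Y) → X ∪ Y ∈ C
  augment : ∀ ⦃X Y : Finset E⦄, X ∈ C → Y ∈ C → r X < r Y →
    ∃ e ∈ Y \ X, insert e X ∈ C

namespace Semimatroid

variable {E : Type*} [DecidableEq E] [Fintype E] (S : Semimatroid E)

/-- The rank `r(𝒞)` of the semimatroid: the common rank of the maximal central sets. -/
def rank : ℕ := S.C.sup S.r

/-- The closure of a central set `X`:
`cl X = {e ∈ E : X ∪ {e} ∈ 𝒞 and r (X ∪ {e}) = r X}`. -/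
def cl (X : Finset E) : Finset E :=
  Finset.univ.filter fun e => insert e X ∈ S.C ∧ S.r (insert e X) = S.r X

/-- The flats of the semimatroid: central sets `X` with `cl X = X`. -/
def flats : Finset (Finset E) := S.C.filter fun X => S.cl X = X

/-- The characteristic polynomial `χ(𝒞;t) = Σ_{X ∈ 𝒞} (−1)^{|X|} t^{r(𝒞)−r(X)}`. -/
noncomputable def charPoly : Polynomial ℤ :=
  ∑ A ∈ S.C, (-1 : Polynomial ℤ) ^ A.card * Polynomial.X ^ (S.rank - S.r A)

end Semimatroid

namespace Semimatroid

variable {E : Type*} [DecidableEq E] [Fintype E] (S : Semimatroid E)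

/-- The extension `r̂(X) = max{r(Y) : Y ⊆ X, Y ∈ 𝒞}` of the rank function to all of `2^E`;
it is the rank function of the matroid `M_𝒞`. -/
def rhat (X : Finset E) : ℕ := (S.C.filter fun Y => Y ⊆ X).sup S.r

/-- The characteristic polynomial of the matroid `M_𝒞` (Whitney rank formula):
`χ(M_𝒞;t) = Σ_{X ⊆ E} (−1)^{|X|} t^{r̂(E)−r̂(X)}`. -/
noncomputable def matCharPoly : Polynomial ℤ :=
  ∑ A ∈ (Finset.univ : Finset E).powerset,
    (-1 : Polynomial ℤ) ^ A.card * Polynomial.X ^ (S.rhat Finset.univ - S.rhat A)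

/-- The `i`-th unsigned Whitney number of the first kind of the semimatroid. -/
noncomputable def whitney (i : ℕ) : ℤ :=
  (-1 : ℤ) ^ i * S.charPoly.coeff (S.rank - i)

/-- The `i`-th unsigned Whitney number of the first kind of the matroid `M_𝒞`. -/
noncomputable def matWhitney (i : ℕ) : ℤ :=
  (-1 : ℤ) ^ i * S.matCharPoly.coeff (S.rhat Finset.univ - i)

end Semimatroid

/-!
Fix a linear order on the ground set. As for matroids, the `i`-th unsigned Whitney number of a
semimatroid counts the central sets of size `i` containing no broken circuit: toggling the largest
`e` spanned by the elements of `X` above `e` is a sign-reversing, rank-preserving involution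
`X ↦ X ∆ {e}` on the remaining central sets. The matroid `M_𝒞` is itself a semimatroid, in which
every set is central. A set without broken circuits in `M_𝒞` has rank `r̂ X = |X|`, hence is central
in `𝒞`; and since `r̂` extends `r`, it contains no broken circuit of `𝒞` either.
-/

namespace Semimatroid

open Finset
open scoped symmDiff

section Extension

variable {E : Type*} [DecidableEq E] [Fintype E] (S : Semimatroid E) {X Y : Finset E} {e : E}

lemma empty_mem : ∅ ∈ S.C :=
  S.C_nonempty.elim fun _ hX => S.mem_of_subset hX (empty_subset _)

lemma r_le_rank (hX : X ∈ S.C) : S.r X ≤ S.rank :=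
  le_sup hX

lemma coeff_charPoly {i : ℕ} (hi : i ≤ S.rank) :
    S.charPoly.coeff (S.rank - i) = ∑ X ∈ S.C with S.r X = i, (-1 : ℤ) ^ #X := by
  rw [charPoly, Polynomial.finsetSum_coeff, sum_filter]
  refine sum_congr rfl fun X hX => ?_
  have hexp : S.rank - i = S.rank - S.r X ↔ S.r X = i := by
    have := S.r_le_rank hX
    omega
  have hC : (-1 : Polynomial ℤ) ^ #X = Polynomial.C ((-1 : ℤ) ^ #X) := by
    simp only [map_pow, map_neg, map_one]
  simp only [hC, Polynomial.coeff_C_mul_X_pow, hexp]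

lemma mem_cl : e ∈ S.cl X ↔ insert e X ∈ S.C ∧ S.r (insert e X) = S.r X := by
  simp only [cl, mem_filter, mem_univ, true_and]

lemma cl_subset_cl (hXY : X ⊆ Y) (hY : Y ∈ S.C) : S.cl X ⊆ S.cl Y := by
  intro e he
  obtain ⟨heX, hr⟩ := S.mem_cl.1 he
  have hX : X ∈ S.C := S.mem_of_subset hY hXY
  have hI : insert e X ∩ Y ∈ S.C := S.mem_of_subset hY inter_subset_right
  have hXI : S.r X ≤ S.r (insert e X ∩ Y) :=
    S.r_mono hX hI (subset_inter (subset_insert _ _) hXY)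
  have hIe : S.r (insert e X ∩ Y) ≤ S.r (insert e X) := S.r_mono hI heX inter_subset_left
  have heY : insert e X ∪ Y ∈ S.C := S.union_mem heX hY (by omega)
  have hsub := S.submodular heX hY heY
  rw [insert_union, union_eq_right.2 hXY] at heY hsub
  have hYe : S.r Y ≤ S.r (insert e Y) := S.r_mono hY heY (subset_insert _ _)
  exact S.mem_cl.2 ⟨heY, by omega⟩

lemma r_le_rhat (hX : X ∈ S.C) (hXY : X ⊆ Y) : S.r X ≤ S.rhat Y :=
  le_sup (f := S.r) (mem_filter.2 ⟨hX, hXY⟩)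

lemma exists_r_eq_rhat (X : Finset E) : ∃ Y ∈ S.C, Y ⊆ X ∧ S.r Y = S.rhat X := by
  obtain ⟨Y, hY, hr⟩ := exists_mem_eq_sup (S.C.filter (· ⊆ X))
    ⟨∅, mem_filter.2 ⟨S.empty_mem, empty_subset X⟩⟩ S.r
  exact ⟨Y, (mem_filter.1 hY).1, (mem_filter.1 hY).2, hr.symm⟩

lemma rhat_mono (hXY : X ⊆ Y) : S.rhat X ≤ S.rhat Y :=
  sup_mono (monotone_filter_right _ fun _ _ hZ => hZ.trans hXY)

lemma rhat_eq_r (hX : X ∈ S.C) : S.rhat X = S.r X := by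
  refine le_antisymm (Finset.sup_le fun Y hY => ?_) (S.r_le_rhat hX subset_rfl)
  exact S.r_mono (mem_filter.1 hY).1 hX (mem_filter.1 hY).2

lemma rhat_le_card (X : Finset E) : S.rhat X ≤ #X :=
  Finset.sup_le fun _ hY => (S.r_le_card (mem_filter.1 hY).1).trans
    (card_le_card (mem_filter.1 hY).2)

lemma rhat_univ : S.rhat univ = S.rank := by
  simp only [rhat, rank, subset_univ, filter_true]

lemma mem_of_rhat_eq_card (hX : S.rhat X = #X) : X ∈ S.C := by
  obtain ⟨Y, hY, hYX, hr⟩ := S.exists_r_eq_rhat X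
  have : #X ≤ #Y := by rw [← hX, ← hr]; exact S.r_le_card hY
  rwa [← eq_of_subset_of_card_le hYX this]

lemma exists_superset_r_eq_rhat (hX : X ∈ S.C) (hXY : X ⊆ Y) :
    ∃ Z ∈ S.C, X ⊆ Z ∧ Z ⊆ Y ∧ S.r Z = S.rhat Y := by
  obtain ⟨Z, hZ, hmax⟩ := exists_max_image (S.C.filter fun Z => X ⊆ Z ∧ Z ⊆ Y) card
    ⟨X, mem_filter.2 ⟨hX, subset_rfl, hXY⟩⟩
  obtain ⟨hZC, hXZ, hZY⟩ := mem_filter.1 hZ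
  refine ⟨Z, hZC, hXZ, hZY, (S.r_le_rhat hZC hZY).antisymm ?_⟩
  obtain ⟨W, hW, hWY, hr⟩ := S.exists_r_eq_rhat Y
  by_contra! hlt
  obtain ⟨e, he, heZ⟩ := S.augment hZC hW (hr ▸ hlt)
  obtain ⟨heW, heZ'⟩ := mem_sdiff.1 he
  have := hmax (insert e Z) (mem_filter.2
    ⟨heZ, hXZ.trans (subset_insert _ _), insert_subset (hWY heW) hZY⟩)
  rw [card_insert_of_notMem heZ'] at this
  omega

lemma rhat_submodular (X Y : Finset E) :
    S.rhat (X ∩ Y) + S.rhat (X ∪ Y) ≤ S.rhat X + S.rhat Y := by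
  obtain ⟨B, hB, hBXY, hrB⟩ := S.exists_r_eq_rhat (X ∩ Y)
  obtain ⟨Z, hZ, hBZ, hZXY, hrZ⟩ :=
    S.exists_superset_r_eq_rhat hB (hBXY.trans inter_subset_union)
  have hcover : Z ∩ X ∪ Z ∩ Y = Z := by rw [← inter_union_distrib_left, inter_eq_left.2 hZXY]
  have hZX : Z ∩ X ∈ S.C := S.mem_of_subset hZ inter_subset_left
  have hZY : Z ∩ Y ∈ S.C := S.mem_of_subset hZ inter_subset_left
  calc S.rhat (X ∩ Y) + S.rhat (X ∪ Y)
      = S.r B + S.r Z := by rw [hrB, hrZ]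
    _ ≤ S.r (Z ∩ X ∩ (Z ∩ Y)) + S.r (Z ∩ X ∪ Z ∩ Y) := by
        rw [hcover, ← inter_inter_distrib_left]
        gcongr
        exact S.r_mono hB (S.mem_of_subset hZ inter_subset_left) (subset_inter hBZ hBXY)
    _ ≤ S.r (Z ∩ X) + S.r (Z ∩ Y) := S.submodular hZX hZY (hcover.symm ▸ hZ)
    _ ≤ S.rhat X + S.rhat Y :=
        add_le_add (S.r_le_rhat hZX inter_subset_right) (S.r_le_rhat hZY inter_subset_right)

/-- The matroid `M_𝒞`, encoded as a semimatroid in which every set is central, so that results on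
semimatroids apply to it. -/
def extension : Semimatroid E where
  C := univ.powerset
  r := S.rhat
  C_nonempty := powerset_nonempty _
  mem_of_subset _ _ _ _ := mem_powerset.2 (subset_univ _)
  r_le_card X _ := S.rhat_le_card X
  r_mono _ _ _ _ := S.rhat_mono
  submodular X Y _ _ _ := S.rhat_submodular X Y
  union_mem _ _ _ _ _ := mem_powerset.2 (subset_univ _)
  augment X Y _ _ hlt := by
    obtain ⟨e, heY, heX⟩ := not_subset.1 fun hYX => hlt.not_ge (S.rhat_mono hYX)
    exact ⟨e, mem_sdiff.2 ⟨heY, heX⟩, mem_powerset.2 (subset_univ _)⟩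

lemma rank_extension : S.extension.rank = S.rhat univ :=
  le_antisymm (Finset.sup_le fun X _ => S.rhat_mono (subset_univ X))
    (S.extension.r_le_rank (mem_powerset_self univ))

lemma whitney_extension (i : ℕ) : S.extension.whitney i = S.matWhitney i := by
  simp only [whitney, matWhitney, charPoly, matCharPoly, rank_extension]
  rfl

lemma cl_subset_cl_extension (X : Finset E) : S.cl X ⊆ S.extension.cl X := by
  intro e he
  obtain ⟨heX, hr⟩ := S.mem_cl.1 he
  have hX : X ∈ S.C := S.mem_of_subset heX (subset_insert _ _)
  refine S.extension.mem_cl.2 ⟨mem_powerset.2 (subset_univ _), ?_⟩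
  exact (S.rhat_eq_r heX).trans (hr.trans (S.rhat_eq_r hX).symm)

end Extension

section BrokenCircuits

lemma symmDiff_singleton_of_mem {α : Type*} [DecidableEq α] {X : Finset α} {e : α} (he : e ∈ X) :
    X ∆ {e} = X.erase e := by
  rw [symmDiff_of_ge (singleton_subset_iff.2 he), sdiff_singleton_eq_erase]

lemma symmDiff_singleton_of_notMem {α : Type*} [DecidableEq α] {X : Finset α} {e : α}
    (he : e ∉ X) : X ∆ {e} = insert e X := by
  rw [symmDiff_eq_union (disjoint_singleton_right.2 he), union_comm, insert_eq]

lemma neg_one_pow_card_add_symmDiff_singleton {α R : Type*} [DecidableEq α] [Ring R]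
    (X : Finset α) (e : α) : (-1 : R) ^ #X + (-1) ^ #(X ∆ {e}) = 0 := by
  by_cases he : e ∈ X
  · rw [symmDiff_singleton_of_mem he, ← card_erase_add_one he, pow_succ, mul_neg_one,
      neg_add_cancel]
  · rw [symmDiff_singleton_of_notMem he, card_insert_of_notMem he, pow_succ, mul_neg_one,
      add_neg_cancel]

variable {E : Type*} [LinearOrder E] [Fintype E] (S : Semimatroid E) {X Y : Finset E} {e g : E}

/-- The elements `e` spanned by the elements of `X` above `e`. For `X` central there is one exactly
when `X` contains a broken circuit, i.e. a central circuit with its smallest element removed. -/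
def active (X : Finset E) : Finset E :=
  {e | e ∈ S.cl {g ∈ X | e < g}}

lemma mem_active : e ∈ S.active X ↔ e ∈ S.cl {g ∈ X | e < g} :=
  mem_filter_univ e

lemma active_subset_active (hXY : X ⊆ Y) (hY : Y ∈ S.C) : S.active X ⊆ S.active Y :=
  fun _ he => S.mem_active.2 <| S.cl_subset_cl (filter_subset_filter _ hXY)
    (S.mem_of_subset hY (filter_subset _ _)) (S.mem_active.1 he)

lemma active_subset_active_extension (X : Finset E) : S.active X ⊆ S.extension.active X :=
  fun _ he => S.extension.mem_active.2 (S.cl_subset_cl_extension _ (S.mem_active.1 he))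

lemma mem_active_symmDiff_singleton (heg : e ≤ g) :
    g ∈ S.active (X ∆ {e}) ↔ g ∈ S.active X := by
  have : {x ∈ X ∆ {e} | g < x} = {x ∈ X | g < x} := by
    ext x
    simp only [mem_filter, mem_symmDiff, mem_singleton]
    grind
  rw [mem_active, mem_active, this]

lemma isGreatest_active_symmDiff_singleton (he : IsGreatest (S.active X : Set E) e) :
    IsGreatest (S.active (X ∆ {e}) : Set E) e := by
  refine ⟨(S.mem_active_symmDiff_singleton le_rfl).2 he.1, fun g hg => ?_⟩
  by_contra! hlt
  exact hlt.not_ge (he.2 ((S.mem_active_symmDiff_singleton hlt.le).1 hg))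

lemma symmDiff_singleton_mem_and_r_eq (hX : X ∈ S.C) (he : e ∈ S.active X) :
    X ∆ {e} ∈ S.C ∧ S.r (X ∆ {e}) = S.r X := by
  rw [mem_active] at he
  by_cases heX : e ∈ X
  · have herase : X.erase e ∈ S.C := S.mem_of_subset hX (erase_subset _ _)
    have hsub : {g ∈ X | e < g} ⊆ X.erase e := fun g hg =>
      mem_erase.2 ⟨(mem_filter.1 hg).2.ne', (mem_filter.1 hg).1⟩
    have hr := (S.mem_cl.1 (S.cl_subset_cl hsub herase he)).2
    rw [insert_erase heX] at hr
    rw [symmDiff_singleton_of_mem heX]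
    exact ⟨herase, hr.symm⟩
  · rw [symmDiff_singleton_of_notMem heX]
    exact S.mem_cl.1 (S.cl_subset_cl (filter_subset _ X) hX he)

lemma sum_active_nonempty_eq_zero (i : ℕ) :
    ∑ X ∈ S.C with S.r X = i ∧ (S.active X).Nonempty, (-1 : ℤ) ^ #X = 0 := by
  have hne {X} (hX : X ∈ S.C.filter fun X => S.r X = i ∧ (S.active X).Nonempty) :
      (S.active X).Nonempty := (mem_filter.1 hX).2.2
  have hmem : ∀ X hX, X ∆ {(S.active X).max' (hne hX)} ∈
      S.C.filter fun X => S.r X = i ∧ (S.active X).Nonempty := by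
    intro X hX
    obtain ⟨hXC, hr, h⟩ := mem_filter.1 hX
    obtain ⟨hC, hr'⟩ := S.symmDiff_singleton_mem_and_r_eq hXC (max'_mem _ h)
    exact mem_filter.2 ⟨hC, hr'.trans hr,
      ⟨_, (S.isGreatest_active_symmDiff_singleton (isGreatest_max' _ h)).1⟩⟩
  refine sum_involution (fun X hX => X ∆ {(S.active X).max' (hne hX)})
    (fun X _ => neg_one_pow_card_add_symmDiff_singleton X _)
    (fun X _ _ => by simp) hmem fun X hX => ?_
  have hmax := (isGreatest_max' _ (hne (hmem X hX))).unique
    (S.isGreatest_active_symmDiff_singleton (isGreatest_max' _ (hne hX)))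
  simp only [hmax, symmDiff_symmDiff_cancel_right]

/-- The broken circuit complex: the central sets containing no broken circuit. -/
def nbc : Finset (Finset E) :=
  {X ∈ S.C | S.active X = ∅}

lemma mem_nbc : X ∈ S.nbc ↔ X ∈ S.C ∧ S.active X = ∅ :=
  mem_filter

lemma mem_nbc_of_subset (hY : Y ∈ S.nbc) (hXY : X ⊆ Y) : X ∈ S.nbc := by
  obtain ⟨hYC, hYa⟩ := S.mem_nbc.1 hY
  exact S.mem_nbc.2 ⟨S.mem_of_subset hYC hXY,
    subset_empty.1 (hYa ▸ S.active_subset_active hXY hYC)⟩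

lemma r_eq_card_of_mem_nbc (hX : X ∈ S.nbc) : S.r X = #X := by
  induction X using Finset.induction_on_min with
  | empty => simpa using S.r_le_card S.empty_mem
  | insert a X ha ih =>
    obtain ⟨haX, hact⟩ := S.mem_nbc.1 hX
    have hfilter : {x ∈ insert a X | a < x} = X := by
      rw [filter_insert, if_neg (lt_irrefl a), filter_true_of_mem ha]
    have hne : S.r (insert a X) ≠ S.r X := fun hr => by
      have : a ∈ S.active (insert a X) := by
        rw [mem_active, hfilter]
        exact S.mem_cl.2 ⟨haX, hr⟩
      simp [hact] at this
    have hXn : X ∈ S.nbc := S.mem_nbc_of_subset hX (subset_insert _ _)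
    have hle : S.r X ≤ S.r (insert a X) :=
      S.r_mono (S.mem_nbc.1 hXn).1 haX (subset_insert _ _)
    have hcard := S.r_le_card haX
    have hrX := ih hXn
    rw [card_insert_of_notMem fun h => lt_irrefl a (ha a h)] at hcard ⊢
    omega

lemma nbc_extension_subset : S.extension.nbc ⊆ S.nbc := by
  intro X hX
  refine S.mem_nbc.2 ⟨S.mem_of_rhat_eq_card (S.extension.r_eq_card_of_mem_nbc hX), ?_⟩
  exact subset_empty.1 ((S.extension.mem_nbc.1 hX).2 ▸ S.active_subset_active_extension X)

theorem whitney_eq_card_nbc {i : ℕ} (hi : i ≤ S.rank) :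
    S.whitney i = #{X ∈ S.nbc | #X = i} := by
  have hnbc : {X ∈ S.C | S.r X = i ∧ ¬(S.active X).Nonempty} = {X ∈ S.nbc | #X = i} := by
    ext X
    rw [mem_filter, mem_filter, mem_nbc, not_nonempty_iff_eq_empty, and_assoc]
    refine and_congr_right fun hX => and_comm.trans (and_congr_right fun hact => ?_)
    rw [S.r_eq_card_of_mem_nbc (S.mem_nbc.2 ⟨hX, hact⟩)]
  calc S.whitney i
      = (-1) ^ i * ∑ X ∈ S.C with S.r X = i, (-1) ^ #X := by rw [whitney, S.coeff_charPoly hi]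
    _ = (-1) ^ i * ∑ X ∈ S.nbc with #X = i, (-1) ^ #X := by
        rw [← sum_filter_add_sum_filter_not _ fun X => (S.active X).Nonempty, filter_filter,
          filter_filter, S.sum_active_nonempty_eq_zero, zero_add, hnbc]
    _ = (-1) ^ i * (#{X ∈ S.nbc | #X = i} * (-1) ^ i) := by
        rw [sum_congr rfl fun X hX => by rw [(mem_filter.1 hX).2], sum_const, nsmul_eq_mul]
    _ = #{X ∈ S.nbc | #X = i} := by
        rw [mul_left_comm, ← mul_pow, neg_one_mul, neg_neg, one_pow, mul_one]

end BrokenCircuits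

theorem matWhitney_le_whitney_general {E : Type*} [DecidableEq E] [Fintype E] (S : Semimatroid E)
    {i : ℕ} (hi : i ≤ S.rank) : S.matWhitney i ≤ S.whitney i := by
  obtain ⟨_, -⟩ := exists_wellFoundedLT E
  obtain rfl : ‹DecidableEq E› = LinearOrder.toDecidableEq := Subsingleton.elim _ _
  have hi' : i ≤ S.extension.rank := by rwa [rank_extension, rhat_univ]
  rw [← whitney_extension, whitney_eq_card_nbc _ hi, whitney_eq_card_nbc _ hi']
  exact_mod_cast card_le_card (filter_subset_filter _ S.nbc_extension_subset)

end Semimatroid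

/-- For a loopless semimatroid, `w_i(M_𝒞) ≤ w_i(𝒞)` for `0 ≤ i ≤ r(𝒞)`. -/
theorem Semimatroid.matWhitney_le_whitney
    {E : Type*} [DecidableEq E] [Fintype E] (S : Semimatroid E)
    (hloopless : ¬ ∃ e : E, {e} ∈ S.C ∧ S.r {e} = 0)
    (i : ℕ) (hi : i ≤ S.rank) :
    S.matWhitney i ≤ S.whitney i :=
  S.matWhitney_le_whitney_general hi
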